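/- Let V be a finite set, let A be a symmetric V × V matrix over GF(2) (a graph with loops), and let u ∈ V with A_{uu} = 1 (u has a loop). Then for every Y ⊆ V, det((A*u)[Y]) = det(A[Y ⊕ {u}]) over GF(2), where ⊕ is symmetric difference. -/

import Mathlib

/-!
Over GF(2), where a loop is a pivot equal to `1`, local complementation at `u` is the principal
pivot transform at `u`. A principal minor whose index set contains `u` is the pivot times the
determinant of the Schur complement of `u`, and outside `u` that Schur complement is the pivoted
matrix. Conversely, the Schur complement of `u` in the pivoted matrix gives back the original
entries, which settles the index sets that contain `u`.
-/

variable {V : Type*} [Fintype V] [DecidableEq V]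

/-- Principal submatrix with rows and columns indexed by `S`. -/
def psub (A : Matrix V V (ZMod 2)) (S : Finset V) : Matrix S S (ZMod 2) :=
  A.submatrix (fun i : S => (i : V)) (fun j : S => (j : V))

/-- Local complementation at a looped vertex `u` of a graph with loops,
identified with its symmetric adjacency matrix over GF(2):
`(A*u)_{xy} = A_{xy} + A_{xu}·A_{uy}` for `x, y ≠ u`, entries in row/column `u` unchanged. -/
def matLC (A : Matrix V V (ZMod 2)) (u : V) : Matrix V V (ZMod 2) :=
  fun x y => if x = u ∨ y = u then A x y else A x y + A x u * A u y

/-- `s_A(x,y)` : `x = y` or `A_{xy} = 1`. -/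
def matNbr (A : Matrix V V (ZMod 2)) (x y : V) : Prop := x = y ∨ A x y = 1

/-- Pivot `A[uv]` on an edge `{u,v}` between two loop-free vertices of a graph with loops:
same diagonal as `A`, and for `x ≠ y`,
`(A[uv])_{xy} = A_{xy} XOR (s_A(x,u) ∧ s_A(y,v)) XOR (s_A(x,v) ∧ s_A(y,u))`. -/
noncomputable def matPivotEdge (A : Matrix V V (ZMod 2)) (u v : V) : Matrix V V (ZMod 2) := by
  classical
  exact fun x y =>
    if x = y then A x y
    else A x y + (if matNbr A x u ∧ matNbr A y v then 1 else 0)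
               + (if matNbr A x v ∧ matNbr A y u then 1 else 0)

/-- Apply a sequence of mixed operations (left to right): `Sum.inl u` is the local
complementation `*u`, `Sum.inr (u,v)` is the pivot `[uv]`. -/
noncomputable def applyOps (A : Matrix V V (ZMod 2)) : List (V ⊕ V × V) → Matrix V V (ZMod 2)
  | [] => A
  | (Sum.inl u) :: φ => applyOps (matLC A u) φ
  | (Sum.inr p) :: φ => applyOps (matPivotEdge A p.1 p.2) φ

/-- A mixed sequence is applicable when each operation's defining condition holds in the
matrix obtained by applying all preceding operations: `*u` needs a loop at `u`, and `[uv]`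
needs `u ≠ v`, both loop-free, and `A_{uv} = 1`. -/
def OpsApplicable (A : Matrix V V (ZMod 2)) : List (V ⊕ V × V) → Prop
  | [] => True
  | (Sum.inl u) :: φ => A u u = 1 ∧ OpsApplicable (matLC A u) φ
  | (Sum.inr p) :: φ => p.1 ≠ p.2 ∧ A p.1 p.1 = 0 ∧ A p.2 p.2 = 0 ∧ A p.1 p.2 = 1 ∧
      OpsApplicable (matPivotEdge A p.1 p.2) φ

/-- The list of vertex occurrences of a mixed sequence: `*u` contributes one occurrence
of `u`, `[uv]` one occurrence each of `u` and `v`. -/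
def opsVertices (φ : List (V ⊕ V × V)) : List V :=
  φ.flatMap fun o => match o with | Sum.inl u => [u] | Sum.inr p => [p.1, p.2]

/-- The support of a mixed sequence: vertices occurring an odd number of times. -/
def opsSupport (φ : List (V ⊕ V × V)) : Finset V :=
  Finset.univ.filter fun x => Odd ((opsVertices φ).count x)

section PrincipalPivot

open Matrix

variable {n R : Type*} [DecidableEq n] [CommRing R] (A : Matrix n n R) (u : n) [Invertible (A u u)]

/-- The principal pivot transform of `A` at the single index `u`, with the sign on row `u`: it is
the matrix obtained from the linear system `y = A x` by exchanging the roles of `x u` and `y u`.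
The pivot is any invertible diagonal entry, so that `R` need not be a field. -/
def principalPivot : Matrix n n R :=
  of fun x y =>
    if x = u then
      if y = u then ⅟(A u u) else -(⅟(A u u) * A u y)
    else
      if y = u then A x u * ⅟(A u u) else A x y - A x u * ⅟(A u u) * A u y

theorem principalPivot_apply_self : principalPivot A u u u = ⅟(A u u) := by
  simp [principalPivot]

variable {u}

theorem principalPivot_apply_right {x : n} (hx : x ≠ u) :
    principalPivot A u x u = A x u * ⅟(A u u) := by
  simp [principalPivot, hx]

theorem principalPivot_apply_left {y : n} (hy : y ≠ u) :
    principalPivot A u u y = -(⅟(A u u) * A u y) := by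
  simp [principalPivot, hy]

theorem principalPivot_apply_of_ne {x y : n} (hx : x ≠ u) (hy : y ≠ u) :
    principalPivot A u x y = A x y - A x u * ⅟(A u u) * A u y := by
  simp [principalPivot, hx, hy]

theorem det_submatrix_insert_eq_mul_det_schur {Z : Finset n} (hu : u ∉ Z) :
    (A.submatrix ((↑) : ↥(insert u Z) → n) (↑)).det =
      A u u * (of fun x y : Z => A x y - A x u * ⅟(A u u) * A u y).det := by
  let e : Z ⊕ Unit ≃ ↥(insert u Z) :=
    ((Finset.subtypeInsertEquivOption hu).trans (Equiv.optionEquivSumPUnit Z)).symm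
  let col : Matrix Z Unit R := of fun x _ => A x u
  let row : Matrix Unit Z R := of fun _ y => A u y
  have : Invertible (scalar Unit (A u u)) := Invertible.map (scalar Unit) (A u u)
  have hblocks : (A.submatrix ((↑) : ↥(insert u Z) → n) (↑)).submatrix e e =
      fromBlocks (A.submatrix (↑) (↑)) col row (scalar Unit (A u u)) := by
    ext (x | _) (y | _) <;> simp [e, col, row, Finset.subtypeInsertEquivOption]
  have hschur : A.submatrix (↑) (↑) - col * ⅟(scalar Unit (A u u)) * row =
      of fun x y : Z => A x y - A x u * ⅟(A u u) * A u y := by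
    rw [← map_invOf (scalar Unit)]
    ext x y
    simp [col, row, mul_apply]
  rw [← det_submatrix_equiv_self e, hblocks, det_fromBlocks₂₂, hschur, det_unique]
  simp

theorem mul_det_submatrix_principalPivot_of_notMem {Y : Finset n} (hu : u ∉ Y) :
    A u u * ((principalPivot A u).submatrix ((↑) : Y → n) (↑)).det =
      (A.submatrix ((↑) : ↥(insert u Y) → n) (↑)).det := by
  rw [det_submatrix_insert_eq_mul_det_schur A hu]
  congr 2
  ext x y
  exact principalPivot_apply_of_ne A (ne_of_mem_of_not_mem x.2 hu) (ne_of_mem_of_not_mem y.2 hu)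

theorem mul_det_submatrix_principalPivot_insert {Z : Finset n} (hu : u ∉ Z) :
    A u u * ((principalPivot A u).submatrix ((↑) : ↥(insert u Z) → n) (↑)).det =
      (A.submatrix ((↑) : Z → n) (↑)).det := by
  let _ : Invertible (principalPivot A u u u) :=
    (invertibleInvOf (a := A u u)).copy _ (principalPivot_apply_self A u)
  have hinv : ⅟(principalPivot A u u u) = A u u :=
    invOf_eq_right_inv (by rw [principalPivot_apply_self, invOf_mul_self])
  rw [det_submatrix_insert_eq_mul_det_schur _ hu, hinv, principalPivot_apply_self,
    mul_invOf_cancel_left']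
  congr 1
  ext x y
  have hx : (x : n) ≠ u := ne_of_mem_of_not_mem x.2 hu
  have hy : (y : n) ≠ u := ne_of_mem_of_not_mem y.2 hu
  simp [principalPivot_apply_of_ne, principalPivot_apply_left,
    principalPivot_apply_right, hx, hy, mul_assoc]

theorem mul_det_submatrix_principalPivot (Y : Finset n) :
    A u u * ((principalPivot A u).submatrix ((↑) : Y → n) (↑)).det =
      (A.submatrix ((↑) : ↥(symmDiff Y {u}) → n) (↑)).det := by
  by_cases hu : u ∈ Y
  · obtain ⟨Z, hZ, rfl⟩ : ∃ Z, u ∉ Z ∧ insert u Z = Y :=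
      ⟨Y.erase u, Y.notMem_erase u, Finset.insert_erase hu⟩
    have hsymmDiff : symmDiff (insert u Z) {u} = Z := by
      rw [symmDiff_of_ge (by simp), Finset.sdiff_singleton_eq_erase, Finset.erase_insert hZ]
    rw [mul_det_submatrix_principalPivot_insert A hZ, hsymmDiff]
  · have hsymmDiff : symmDiff Y {u} = insert u Y := by
      rw [(Finset.disjoint_singleton_right.2 hu).symmDiff_eq_sup, Finset.sup_eq_union,
        Finset.union_singleton]
    rw [mul_det_submatrix_principalPivot_of_notMem A hu, hsymmDiff]

end PrincipalPivot

section LocalComplementation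

variable {n : Type*} [DecidableEq n] (A : Matrix n n (ZMod 2)) {u : n}

theorem principalPivot_eq_matLC [Invertible (A u u)] (hu : A u u = 1) :
    principalPivot A u = matLC A u := by
  ext x y
  by_cases hx : x = u <;> by_cases hy : y = u <;>
    simp [principalPivot, matLC, hx, hy, hu, CharTwo.neg_eq, CharTwo.sub_eq_add]

theorem det_matLC_general (hu : A u u = 1) (Y : Finset n) :
    (psub (matLC A u) Y).det = (psub A (symmDiff Y {u})).det := by
  let _ : Invertible (A u u) := invertibleOne.copy _ hu
  have hpivot := mul_det_submatrix_principalPivot A (u := u) Y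
  rwa [hu, one_mul, principalPivot_eq_matLC A hu] at hpivot

end LocalComplementation

/-- for a graph with loops `A` and a looped vertex `u`,
`det((A*u)[Y]) = det(A[Y ⊕ {u}])` over GF(2) for every `Y ⊆ V`. -/
theorem det_matLC (A : Matrix V V (ZMod 2)) (hA : A.IsSymm) (u : V) (hu : A u u = 1)
    (Y : Finset V) :
    (psub (matLC A u) Y).det = (psub A (symmDiff Y {u})).det :=
  det_matLC_general A hu Y
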